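/- Assume G satisfies the Métivier condition. Let E ⊆ G be precisely monotone with ∂E ≠ G. Then either E = ∅, or E = G, or there exist a nonzero ν ∈ ℝ^{m+ℓ} and c ∈ ℝ such that, setting Ω = {x ∈ ℝ^{m+ℓ} : ⟨x,ν⟩ > c}, one has Ω ⊆ E ⊆ closure(Ω). -/

import Mathlib

/- Step-two Carnot group `G = Z × T` with `Z = ℝ^m`, `T = ℝ^ℓ` and group law
`(z,t)·(ζ,τ) = (z+ζ, t+τ+Q(z,ζ))` for a bilinear skew-symmetric `Q`. -/

noncomputable section

abbrev ZS (m : ℕ) := EuclideanSpace ℝ (Fin m)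

abbrev TS (l : ℕ) := EuclideanSpace ℝ (Fin l)

/-- Group law of the step-two group. -/
def gmul {m l : ℕ} (Q : ZS m →ₗ[ℝ] ZS m →ₗ[ℝ] TS l)
    (p q : ZS m × TS l) : ZS m × TS l :=
  (p.1 + q.1, p.2 + q.2 + Q p.1 q.1)

/-- Horizontal convexity. -/
def HConvex {m l : ℕ} (Q : ZS m →ₗ[ℝ] ZS m →ₗ[ℝ] TS l)
    (C : Set (ZS m × TS l)) : Prop :=
  ∀ p : ZS m × TS l, ∀ u : ZS m, p ∈ C → gmul Q p (u, 0) ∈ C →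
    ∀ s : ℝ, 0 ≤ s → s ≤ 1 → gmul Q p (s • u, 0) ∈ C

/-!
Joining a point to a target by two horizontal moves instead of one makes the target sweep out an
open set. Hence, if a horizontal line leaves the boundary of a precisely monotone set into the
interior, its two open rays lie in the interior and the exterior, so the boundary contains every
horizontal line meeting it twice. Any two points lie in an affine copy of the Heisenberg group.
There, two parallel horizontal lines in such a flat set carry, after a change of coordinates, the
ruled surface `y = xt`, and the horizontal lines joining points of this surface sweep out the whole
group. In the Heisenberg group a proper boundary is therefore contained in a plane, which makes
interiors convex; finally the interior and the exterior are separated by the Hahn-Banach theorem.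
-/

namespace StepTwo

open Topology Set

section Moves

variable {Z T : Type*} [NormedAddCommGroup Z] [NormedSpace ℝ Z] [NormedAddCommGroup T]
  [NormedSpace ℝ T] {Q : Z →L[ℝ] Z →L[ℝ] T}

/-- The horizontal translate `p · (u, 0)` in the step-two group on `Z × T` with bracket `Q`. -/
def hmove (Q : Z →L[ℝ] Z →L[ℝ] T) (p : Z × T) (u : Z) : Z × T :=
  (p.1 + u, p.2 + Q p.1 u)

/-- A Métivier bracket: skew-symmetric, with `Q z` onto the centre for every nonzero `z`. -/
structure IsMetivier (Q : Z →L[ℝ] Z →L[ℝ] T) : Prop where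
  skew : ∀ z w, Q z w = -Q w z
  surjective : ∀ z ≠ 0, Function.Surjective (Q z)

/-- A set containing the horizontal segment between any two of its points on a common
horizontal line. -/
def HorizontallyConvex (Q : Z →L[ℝ] Z →L[ℝ] T) (C : Set (Z × T)) : Prop :=
  ∀ p u, p ∈ C → hmove Q p u ∈ C → ∀ s : ℝ, 0 ≤ s → s ≤ 1 → hmove Q p (s • u) ∈ C

/-- A set which is horizontally convex together with its complement. -/
def PreciselyMonotone (Q : Z →L[ℝ] Z →L[ℝ] T) (E : Set (Z × T)) : Prop :=
  HorizontallyConvex Q E ∧ HorizontallyConvex Q Eᶜ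

/-- A set containing every horizontal line that meets it in two points. -/
def IsHorizontallyFlat (Q : Z →L[ℝ] Z →L[ℝ] T) (S : Set (Z × T)) : Prop :=
  ∀ p u, p ∈ S → hmove Q p u ∈ S → ∀ r : ℝ, hmove Q p (r • u) ∈ S

theorem PreciselyMonotone.compl {E : Set (Z × T)} (hE : PreciselyMonotone Q E) :
    PreciselyMonotone Q Eᶜ :=
  ⟨hE.2, (compl_compl E).symm ▸ hE.1⟩

theorem IsMetivier.apply_self (hQ : IsMetivier Q) (u : Z) : Q u u = 0 := by
  linear_combination (norm := module) (1 / 2 : ℝ) • hQ.skew u u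

@[simp]
theorem hmove_zero (p : Z × T) : hmove Q p 0 = p := by
  simp [hmove]

theorem hmove_smul_hmove_smul {u : Z} (hu : Q u u = 0) (p : Z × T) (a b : ℝ) :
    hmove Q (hmove Q p (a • u)) (b • u) = hmove Q p ((a + b) • u) := by
  simp [hmove, hu, add_smul, add_assoc]

theorem hmove_hmove_smul {u : Z} (hu : Q u u = 0) (p : Z × T) (b : ℝ) :
    hmove Q (hmove Q p u) (b • u) = hmove Q p ((1 + b) • u) := by
  simpa only [one_smul] using hmove_smul_hmove_smul hu p 1 b

theorem hmove_hmove_neg {u : Z} (hu : Q u u = 0) (p : Z × T) :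
    hmove Q (hmove Q p u) (-u) = p := by
  simpa using hmove_hmove_smul hu p (-1)

theorem hmove_add_hmove_neg (p : Z × T) (u : Z) :
    hmove Q p u + hmove Q p (-u) = (2 : ℝ) • p := by
  ext <;> simp [hmove, two_smul] <;> abel

theorem hmove_hmove_sub {x : Z} (hx : Q x x = 0) (p : Z × T) (w : Z) :
    hmove Q (hmove Q p x) (w - x) = (p.1 + w, p.2 + Q p.1 w + Q x w) := by
  ext1
  · simp [hmove]
  · simp only [hmove, add_add_sub_cancel, map_add, add_apply, map_sub, hx]
    abel

@[fun_prop]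
theorem continuous_hmove_comp {X : Type*} [TopologicalSpace X] {p : X → Z × T} {u : X → Z}
    (hp : Continuous p) (hu : Continuous u) : Continuous fun x => hmove Q (p x) (u x) := by
  unfold hmove
  fun_prop

theorem HorizontallyConvex.mem_of_one_le {E : Set (Z × T)} (hE : HorizontallyConvex Q E)
    {q : Z × T} (hq : q ∈ E) {κ : ℝ} (hκ : 1 ≤ κ) {v : Z} (hv : hmove Q q (κ • v) ∈ E) :
    hmove Q q v ∈ E := by
  simpa [smul_smul, inv_mul_cancel₀ (zero_lt_one.trans_le hκ).ne'] using
    hE q (κ • v) hq hv κ⁻¹ (by positivity) (inv_le_one_of_one_le₀ hκ)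

theorem HorizontallyConvex.mem_of_neg {E : Set (Z × T)} (hE : HorizontallyConvex Q E)
    {q : Z × T} {v : Z} (hvv : Q v v = 0) {κ : ℝ} (hκ : κ < 0) (hκv : hmove Q q (κ • v) ∈ E)
    (hv : hmove Q q v ∈ E) : q ∈ E := by
  have hend : hmove Q (hmove Q q v) ((κ - 1) • v) = hmove Q q (κ • v) := by
    rw [hmove_hmove_smul hvv, add_sub_cancel]
  have hmem := hE _ _ hv (hend ▸ hκv) (1 - κ)⁻¹ (by rw [inv_nonneg]; linarith)
    (inv_le_one_of_one_le₀ (by linarith))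
  have hcoef : 1 + (1 - κ)⁻¹ * (κ - 1) = 0 := by
    have : 1 - κ ≠ 0 := by linarith
    field_simp
    ring
  rwa [smul_smul, hmove_hmove_smul hvv, hcoef, zero_smul, hmove_zero] at hmem

theorem IsHorizontallyFlat.hmove_mem_interior {S : Set (Z × T)} (hS : IsHorizontallyFlat Q S)
    {p : Z × T} (hp : p ∈ interior S) {u : Z} (hu : Q u u = 0) :
    hmove Q p u ∈ interior S := by
  have hnear : ∀ᶠ δ : ℝ in 𝓝 0, hmove Q p (δ • u) ∈ interior S :=
    ContinuousAt.eventually_mem (by fun_prop) (isOpen_interior.mem_nhds (by simpa))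
  obtain ⟨δ, hδ, hδ₀ : δ ≠ 0⟩ :=
    ((hnear.filter_mono nhdsWithin_le_nhds).and self_mem_nhdsWithin).exists (f := 𝓝[≠] 0)
  have hback : ∀ᶠ y in 𝓝 (hmove Q p u), hmove Q y (-u) ∈ interior S := by
    refine ContinuousAt.eventually_mem (by fun_prop) (isOpen_interior.mem_nhds ?_)
    rwa [hmove_hmove_neg hu]
  have hback' : ∀ᶠ y in 𝓝 (hmove Q p u), hmove Q (hmove Q y (-u)) (δ • u) ∈ interior S := by
    refine ContinuousAt.eventually_mem (by fun_prop) (isOpen_interior.mem_nhds ?_)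
    rwa [hmove_hmove_neg hu]
  rw [mem_interior_iff_mem_nhds]
  filter_upwards [hback, hback'] with y hy hy'
  have hmem := hS _ _ (interior_subset hy) (interior_subset hy') δ⁻¹
  rw [inv_smul_smul₀ hδ₀] at hmem
  have hreturn := hmove_hmove_neg (u := -u) (by simpa using hu) y
  rw [neg_neg] at hreturn
  rwa [hreturn] at hmem

end Moves

section Rays

variable {Z T : Type*} [NormedAddCommGroup Z] [NormedSpace ℝ Z] [CompleteSpace Z]
  [NormedAddCommGroup T] [NormedSpace ℝ T] [CompleteSpace T] {Q : Z →L[ℝ] Z →L[ℝ] T}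

theorem IsMetivier.map_nhds_hmove_hmove_sub (hQ : IsMetivier Q) (p : Z × T) (x : Z) {w : Z}
    (hw : w ≠ 0) :
    Filter.map (fun y : Z × Z => hmove Q (hmove Q p y.1) (y.2 - y.1)) (𝓝 (x, w)) =
      𝓝 (hmove Q (hmove Q p x) (w - x)) := by
  let fst := ContinuousLinearMap.fst ℝ Z Z
  let snd := ContinuousLinearMap.snd ℝ Z Z
  have hbilin : HasStrictFDerivAt (fun y : Z × Z => Q y.1 y.2)
      (Q.precompR (Z × Z) x snd + Q.precompL (Z × Z) fst w) (x, w) :=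
    Q.hasStrictFDerivAt_of_bilinear (x := (x, w)) fst.hasStrictFDerivAt snd.hasStrictFDerivAt
  have hcoord : (fun y : Z × Z => hmove Q (hmove Q p y.1) (y.2 - y.1)) =
      fun y => (p.1 + y.2, p.2 + Q p.1 y.2 + Q y.1 y.2) :=
    funext fun y => hmove_hmove_sub (hQ.apply_self _) p _
  have hderiv : HasStrictFDerivAt (fun y : Z × Z => hmove Q (hmove Q p y.1) (y.2 - y.1))
      (snd.prod ((Q p.1).comp snd + (Q.precompR (Z × Z) x snd + Q.precompL (Z × Z) fst w)))
      (x, w) := by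
    rw [hcoord]
    exact (snd.hasStrictFDerivAt.const_add p.1).prodMk
      ((((Q p.1).comp snd).hasStrictFDerivAt.const_add p.2).add hbilin)
  refine hderiv.map_nhds_eq_of_surj (LinearMap.range_eq_top.2 fun ⟨b, τ⟩ => ?_)
  obtain ⟨a, ha⟩ := hQ.surjective w hw (Q p.1 b + Q x b - τ)
  refine ⟨(a, b), ?_⟩
  change (b, Q p.1 b + (Q x b + Q a w)) = (b, τ)
  rw [hQ.skew a w, ha]
  congr 1
  abel

/-- The point `y · (su)` is reached through its midpoint with `y`; both half-moves are perturbed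
independently, and the two-step moves so obtained sweep out a neighbourhood. -/
theorem IsMetivier.hmove_smul_mem_interior (hQ : IsMetivier Q) {C E : Set (Z × T)} {K : Set ℝ}
    (rule : ∀ q ∈ C, ∀ κ ∈ K, ∀ v, hmove Q q (κ • v) ∈ E → hmove Q q v ∈ C) {s : ℝ}
    (hs : s ≠ 0) (hs₁ : 2 / s ∈ K) (hs₂ : 2 / s - 1 ∈ K) {y : Z × T} {u : Z} (hu : u ≠ 0)
    (hy : y ∈ C) (hyu : hmove Q y u ∈ interior E) : hmove Q y (s • u) ∈ interior C := by
  have hmid : hmove Q (hmove Q y ((s / 2) • u)) (s • u - (s / 2) • u) = hmove Q y (s • u) := by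
    rw [← sub_smul, hmove_smul_hmove_smul (hQ.apply_self u), add_sub_cancel]
  have hfirst : ∀ᶠ z : Z × Z in 𝓝 ((s / 2) • u, s • u), hmove Q y ((2 / s) • z.1) ∈ interior E := by
    refine ContinuousAt.eventually_mem (by fun_prop) (isOpen_interior.mem_nhds ?_)
    rwa [smul_smul, div_mul_div_cancel₀ hs, div_self two_ne_zero, one_smul]
  have hsecond : ∀ᶠ z : Z × Z in 𝓝 ((s / 2) • u, s • u),
      hmove Q (hmove Q y z.1) ((2 / s - 1) • (z.2 - z.1)) ∈ interior E := by
    refine ContinuousAt.eventually_mem (by fun_prop) (isOpen_interior.mem_nhds ?_)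
    have hcoef : s / 2 + (2 / s - 1) * (s - s / 2) = 1 := by
      field_simp
      ring
    rwa [← sub_smul, smul_smul, hmove_smul_hmove_smul (hQ.apply_self u), hcoef, one_smul]
  rw [mem_interior_iff_mem_nhds, ← hmid, ← hQ.map_nhds_hmove_hmove_sub y _ (smul_ne_zero hs hu),
    Filter.mem_map]
  filter_upwards [hfirst, hsecond] with z hz₁ hz₂
  exact rule _ (rule y hy _ hs₁ _ (interior_subset hz₁)) _ hs₂ _ (interior_subset hz₂)

theorem HorizontallyConvex.hmove_smul_mem_interior {E : Set (Z × T)}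
    (hE : HorizontallyConvex Q E) (hQ : IsMetivier Q) {y : Z × T} {u : Z} (hu : u ≠ 0)
    (hy : y ∈ E) (hyu : hmove Q y u ∈ interior E) {s : ℝ} (hs₀ : 0 < s) (hs₁ : s ≤ 1) :
    hmove Q y (s • u) ∈ interior E := by
  have htwo : 2 ≤ 2 / s := by rw [le_div_iff₀ hs₀]; linarith
  exact hQ.hmove_smul_mem_interior (K := Ici 1)
    (fun _ hq _ hκ _ hv => hE.mem_of_one_le hq hκ hv) hs₀.ne'
    (by rw [mem_Ici]; linarith) (by rw [mem_Ici]; linarith) hu hy hyu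

theorem HorizontallyConvex.hmove_smul_mem_interior_compl {E : Set (Z × T)}
    (hE : HorizontallyConvex Q E) (hQ : IsMetivier Q) {y : Z × T} {u : Z} (hu : u ≠ 0)
    (hy : y ∉ E) (hyu : hmove Q y u ∈ interior E) {s : ℝ} (hs : s < 0) :
    hmove Q y (s • u) ∈ interior Eᶜ := by
  have htwo : 2 / s < 0 := div_neg_of_pos_of_neg two_pos hs
  exact hQ.hmove_smul_mem_interior (C := Eᶜ) (K := Iio 0)
    (fun _ hq _ hκ v hκv hv => hq (hE.mem_of_neg (hQ.apply_self v) hκ hκv hv)) hs.ne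
    htwo (by rw [mem_Iio]; linarith) hu hy hyu

theorem HorizontallyConvex.hmove_neg_smul_mem_interior_compl {E : Set (Z × T)}
    (hE : HorizontallyConvex Q E) (hQ : IsMetivier Q) {p : Z × T} {u : Z}
    (hp : p ∉ interior E) (hpu : hmove Q p u ∈ interior E) {r : ℝ} (hr : 0 < r) :
    hmove Q p (-r • u) ∈ interior Eᶜ := by
  have hu : u ≠ 0 := by
    rintro rfl
    exact hp (by rwa [hmove_zero] at hpu)
  have hbase (r : ℝ) : hmove Q (hmove Q p (-r • u)) ((1 + r) • u) = hmove Q p u := by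
    rw [hmove_smul_hmove_smul (hQ.apply_self u), neg_add_cancel_comm_assoc, one_smul]
  have hnot : ∀ r : ℝ, 0 < r → hmove Q p (-r • u) ∉ E := fun r hr hmem => by
    have h := hE.hmove_smul_mem_interior hQ (smul_ne_zero (by positivity : 1 + r ≠ 0) hu) hmem
      ((hbase r).symm ▸ hpu) (s := r / (1 + r)) (by positivity)
      (by rw [div_le_one (by positivity)]; linarith)
    rw [smul_smul, div_mul_cancel₀ _ (by positivity : 1 + r ≠ 0),
      hmove_smul_hmove_smul (hQ.apply_self u), neg_add_cancel, zero_smul, hmove_zero] at h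
    exact hp h
  have hhalf : 0 < r / 2 := half_pos hr
  have hne : 1 + r / 2 ≠ 0 := by positivity
  have h := hE.hmove_smul_mem_interior_compl hQ (smul_ne_zero hne hu) (hnot _ hhalf)
    ((hbase _).symm ▸ hpu) (s := -(r / 2) / (1 + r / 2))
    (div_neg_of_neg_of_pos (by linarith) (by positivity))
  rwa [smul_smul, div_mul_cancel₀ _ hne, hmove_smul_hmove_smul (hQ.apply_self u),
    ← neg_add, add_halves] at h

theorem HorizontallyConvex.hmove_neg_mem_interior_compl {E : Set (Z × T)}
    (hE : HorizontallyConvex Q E) (hQ : IsMetivier Q) {p : Z × T} {u : Z}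
    (hp : p ∉ interior E) (hpu : hmove Q p u ∈ interior E) : hmove Q p (-u) ∈ interior Eᶜ := by
  simpa using hE.hmove_neg_smul_mem_interior_compl hQ hp hpu one_pos

theorem PreciselyMonotone.hmove_smul_mem_interior {E : Set (Z × T)}
    (hE : PreciselyMonotone Q E) (hQ : IsMetivier Q) {p : Z × T} {u : Z}
    (hp : p ∈ frontier E) (hpu : hmove Q p u ∈ interior E) {r : ℝ} (hr : 0 < r) :
    hmove Q p (r • u) ∈ interior E := by
  have h := hE.2.hmove_neg_smul_mem_interior_compl hQ (frontier_compl E ▸ hp).2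
    (hE.1.hmove_neg_mem_interior_compl hQ hp.2 hpu) hr
  rwa [compl_compl, smul_neg, neg_smul, neg_neg] at h

theorem PreciselyMonotone.hmove_smul_notMem_interior {E : Set (Z × T)}
    (hE : PreciselyMonotone Q E) (hQ : IsMetivier Q) {p : Z × T} {u : Z}
    (hp : p ∈ frontier E) (hpu : hmove Q p u ∈ frontier E) (r : ℝ) :
    hmove Q p (r • u) ∉ interior E := by
  intro hr
  rcases eq_or_ne r 0 with rfl | hr₀
  · exact hp.2 (by rwa [zero_smul, hmove_zero] at hr)
  have hinv : r⁻¹ • r • u = u := inv_smul_smul₀ hr₀ u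
  rcases lt_or_gt_of_ne hr₀ with hneg | hpos
  · have h := hE.1.hmove_neg_smul_mem_interior_compl hQ hp.2 hr (neg_pos.2 (inv_lt_zero.2 hneg))
    rw [neg_neg, hinv] at h
    exact (frontier_compl E ▸ hpu).2 h
  · have h := hE.hmove_smul_mem_interior hQ hp hr (inv_pos.2 hpos)
    rw [hinv] at h
    exact hpu.2 h

theorem PreciselyMonotone.isHorizontallyFlat_frontier {E : Set (Z × T)}
    (hE : PreciselyMonotone Q E) (hQ : IsMetivier Q) : IsHorizontallyFlat Q (frontier E) := by
  intro p u hp hpu r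
  rw [← notMem_compl_iff, compl_frontier_eq_union_interior]
  rintro (h | h)
  · exact hE.hmove_smul_notMem_interior hQ hp hpu r h
  · rw [← frontier_compl] at hp hpu
    exact hE.compl.hmove_smul_notMem_interior hQ hp hpu r h

end Rays

section HalfSpaceCriterion

theorem subset_interior_of_isPreconnected {X : Type*} [TopologicalSpace X] {s E : Set X}
    (hs : IsPreconnected s) (hsE : Disjoint s (frontier E)) (hne : (s ∩ interior E).Nonempty) :
    s ⊆ interior E :=
  hs.subset_left_of_subset_union isOpen_interior isOpen_interior
    (disjoint_compl_right.mono interior_subset interior_subset)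
    (compl_frontier_eq_union_interior (s := E) ▸ hsE.subset_compl_right) hne

variable {Z T : Type*} [NormedAddCommGroup Z] [NormedSpace ℝ Z] [CompleteSpace Z]
  [NormedAddCommGroup T] [NormedSpace ℝ T] [CompleteSpace T] {Q : Z →L[ℝ] Z →L[ℝ] T}
  {E : Set (Z × T)}

theorem PreciselyMonotone.exists_hmove_mem_frontier (hE : PreciselyMonotone Q E)
    (hQ : IsMetivier Q) (hZ : 1 < Module.rank ℝ Z) {p : Z × T} (hp : p ∈ frontier E) :
    ∃ u ≠ 0, hmove Q p u ∈ frontier E := by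
  by_contra! hcon
  have key : ∀ {E : Set (Z × T)}, PreciselyMonotone Q E → p ∈ frontier E →
      (∀ u ≠ 0, hmove Q p u ∉ frontier E) → ∀ u ≠ 0, hmove Q p u ∉ interior E := by
    intro E hE hp hcon u hu hpu
    have himage : hmove Q p '' {0}ᶜ ⊆ interior E := by
      refine subset_interior_of_isPreconnected
        ((isConnected_compl_singleton_of_one_lt_rank hZ 0).isPreconnected.image _
          (by fun_prop)) ?_ ⟨_, mem_image_of_mem _ hu, hpu⟩
      rw [disjoint_left, forall_mem_image]
      exact hcon
    exact interior_subset (hE.1.hmove_neg_mem_interior_compl hQ hp.2 hpu)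
      (interior_subset (himage (mem_image_of_mem _ (neg_ne_zero.2 hu))))
  have : Nontrivial Z := rank_pos_iff_nontrivial.1 (zero_lt_one.trans hZ)
  obtain ⟨u, hu⟩ := exists_ne (0 : Z)
  have hmem := hcon u hu
  rw [← mem_compl_iff, compl_frontier_eq_union_interior] at hmem
  rcases hmem with h | h
  · exact key hE hp hcon u hu h
  · rw [← frontier_compl] at hp hcon
    exact key hE.compl hp hcon u hu h

theorem PreciselyMonotone.interior_eq_halfSpace (hE : PreciselyMonotone Q E) (hQ : IsMetivier Q)
    {f : Z × T →L[ℝ] ℝ} {c : ℝ} (hf : ∀ q ∈ frontier E, f q = c) {p : Z × T} {u : Z}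
    (hp : p ∈ frontier E) (hpu : hmove Q p u ∈ interior E) (hc : c < f (hmove Q p u)) :
    interior E = {x | c < f x} := by
  have hf₀ : f ≠ 0 := by
    rintro rfl
    exact hc.ne (hf p hp).symm
  have hsum : f (hmove Q p u) + f (hmove Q p (-u)) = 2 * c := by
    rw [← map_add, hmove_add_hmove_neg, map_smul, hf p hp, smul_eq_mul]
  have hgt : {x | c < f x} ⊆ interior E := by
    refine subset_interior_of_isPreconnected
      (convex_halfSpace_gt f.toLinearMap.isLinear c).isPreconnected ?_ ⟨_, hc, hpu⟩
    exact disjoint_left.2 fun x hx hxE => hx.ne' (hf x hxE)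
  have hlt : {x | f x < c} ⊆ interior Eᶜ := by
    refine subset_interior_of_isPreconnected
      (convex_halfSpace_lt f.toLinearMap.isLinear c).isPreconnected ?_
      ⟨_, ?_, hE.1.hmove_neg_mem_interior_compl hQ hp.2 hpu⟩
    · exact disjoint_left.2 fun x hx hxE => hx.ne (hf x (frontier_compl E ▸ hxE))
    · rw [mem_ofPred_eq]
      linarith
  have hge : interior E ⊆ f ⁻¹' Ici c := fun x hx => by
    by_contra h
    exact interior_subset (hlt (show f x < c from not_le.1 h)) (interior_subset hx)
  refine hgt.antisymm' ?_
  have hint := interior_maximal hge isOpen_interior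
  rwa [← (f.isOpenMap_of_ne_zero hf₀).preimage_interior_eq_interior_preimage f.continuous,
    interior_Ici] at hint

theorem PreciselyMonotone.convex_interior_of_frontier_subset (hE : PreciselyMonotone Q E)
    (hQ : IsMetivier Q) {f : Z × T →L[ℝ] ℝ} {c : ℝ} (hf : ∀ q ∈ frontier E, f q = c)
    {p : Z × T} {u : Z} (hp : p ∈ frontier E) (hpu : f (hmove Q p u) ≠ c) :
    Convex ℝ (interior E) := by
  have key : ∀ u, hmove Q p u ∈ interior E → f (hmove Q p u) ≠ c → Convex ℝ (interior E) := by
    intro u hu hne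
    rcases hne.lt_or_gt with hlt | hgt
    · rw [hE.interior_eq_halfSpace hQ (f := -f) (c := -c) (fun q hq => by simp [hf q hq]) hp hu
        (by simpa using hlt)]
      exact convex_halfSpace_gt (-f).toLinearMap.isLinear _
    · rw [hE.interior_eq_halfSpace hQ hf hp hu hgt]
      exact convex_halfSpace_gt f.toLinearMap.isLinear _
  have hout : hmove Q p u ∈ (frontier E)ᶜ := fun h => hpu (hf _ h)
  rw [compl_frontier_eq_union_interior] at hout
  rcases hout with hin | hin
  · exact key u hin hpu
  have hsum : f (hmove Q p u) + f (hmove Q p (-u)) = 2 * c := by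
    rw [← map_add, hmove_add_hmove_neg, map_smul, hf p hp, smul_eq_mul]
  refine key (-u) ?_ fun h => hpu (by linarith)
  simpa using hE.2.hmove_neg_mem_interior_compl hQ (frontier_compl E ▸ hp).2 hin

end HalfSpaceCriterion

section HeisenbergChart

/-- The bracket `z₁w₂ - z₂w₁` of the first Heisenberg group, modelled on `(ℝ × ℝ) × ℝ`. -/
def heisForm : (ℝ × ℝ) →L[ℝ] (ℝ × ℝ) →L[ℝ] ℝ :=
  (ContinuousLinearMap.fst ℝ ℝ ℝ).smulRight (ContinuousLinearMap.snd ℝ ℝ ℝ) -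
    (ContinuousLinearMap.snd ℝ ℝ ℝ).smulRight (ContinuousLinearMap.fst ℝ ℝ ℝ)

@[simp]
theorem heisForm_apply (z w : ℝ × ℝ) : heisForm z w = z.1 * w.2 - z.2 * w.1 := by
  simp [heisForm]

theorem isMetivier_heisForm : IsMetivier heisForm where
  skew z w := by
    simp only [heisForm_apply]
    ring
  surjective z hz τ := by
    have hnorm : z.1 ^ 2 + z.2 ^ 2 ≠ 0 := fun h =>
      hz (Prod.ext (by rw [Prod.fst_zero]; nlinarith) (by rw [Prod.snd_zero]; nlinarith))
    refine ⟨(τ / (z.1 ^ 2 + z.2 ^ 2)) • (-z.2, z.1), ?_⟩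
    simp only [heisForm_apply, Prod.smul_mk, smul_eq_mul]
    field_simp
    ring

theorem exists_eq_smul_add_smul {u v : ℝ × ℝ} (huv : heisForm u v ≠ 0) (w : ℝ × ℝ) :
    ∃ a b : ℝ, w = a • u + b • v := by
  refine ⟨heisForm w v / heisForm u v, heisForm u w / heisForm u v, ?_⟩
  have hcramer : heisForm u v • w = heisForm w v • u + heisForm u w • v := by
    ext <;> simp <;> ring
  rw [← smul_right_inj huv, hcramer, smul_add, smul_smul, smul_smul, mul_div_cancel₀ _ huv,
    mul_div_cancel₀ _ huv]

variable {Z T : Type*} [NormedAddCommGroup Z] [NormedSpace ℝ Z] [NormedAddCommGroup T]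
  [NormedSpace ℝ T] {Q : Z →L[ℝ] Z →L[ℝ] T}

/-- The left translate by `p` of the homomorphism from the Heisenberg group that sends its two
standard horizontal generators to `u` and `v`; it transports problems on the group to the
Heisenberg group. -/
def heisChart (Q : Z →L[ℝ] Z →L[ℝ] T) (p : Z × T) (u v : Z) (x : (ℝ × ℝ) × ℝ) : Z × T :=
  (p.1 + (x.1.1 • u + x.1.2 • v), p.2 + Q p.1 (x.1.1 • u + x.1.2 • v) + x.2 • Q u v)

theorem continuous_heisChart (p : Z × T) (u v : Z) : Continuous (heisChart Q p u v) := by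
  unfold heisChart
  fun_prop

theorem heisChart_zero (p : Z × T) (u v : Z) : heisChart Q p u v 0 = p := by
  simp [heisChart]

theorem heisChart_convexCombination (p : Z × T) (u v : Z) (x y : (ℝ × ℝ) × ℝ) {a b : ℝ}
    (hab : a + b = 1) :
    heisChart Q p u v (a • x + b • y) = a • heisChart Q p u v x + b • heisChart Q p u v y := by
  obtain rfl : b = 1 - a := by linarith
  ext <;> simp [heisChart] <;> module

theorem IsMetivier.heisChart_hmove (hQ : IsMetivier Q) (p : Z × T) (u v : Z)
    (x : (ℝ × ℝ) × ℝ) (w : ℝ × ℝ) :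
    heisChart Q p u v (hmove heisForm x w) =
      hmove Q (heisChart Q p u v x) (w.1 • u + w.2 • v) := by
  ext <;> simp [heisChart, hmove, hQ.apply_self, hQ.skew v u] <;> module

theorem IsMetivier.heisChart_swap (hQ : IsMetivier Q) (p : Z × T) (u v : Z) (x y t : ℝ) :
    heisChart Q p v u ((y, x), -t) = heisChart Q p u v ((x, y), t) := by
  ext <;> simp [heisChart, hQ.skew v u, add_comm (y • v)]

theorem IsMetivier.heisChart_parallel (hQ : IsMetivier Q) (p : Z × T) (u v : Z) (s r : ℝ) :
    heisChart Q (hmove Q p ((1 / 2 : ℝ) • u)) ((1 / 2 : ℝ) • u) v ((s, r), s * r) =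
      hmove Q (hmove Q p (((1 + s) / 2) • u)) (r • v) := by
  have hpoint : ((s, r), s * r) = hmove heisForm (hmove heisForm 0 (s, 0)) (0, r) := by
    simp [hmove]
  have hcoef : 1 / 2 + s * (1 / 2) = (1 + s) / 2 := by ring
  rw [hpoint, hQ.heisChart_hmove, hQ.heisChart_hmove, heisChart_zero]
  simp only [zero_smul, add_zero, zero_add, smul_smul, zero_mul]
  rw [hmove_smul_hmove_smul (hQ.apply_self u), hcoef]

theorem heisChart_surjective {u v : ℝ × ℝ} (huv : heisForm u v ≠ 0) (p : (ℝ × ℝ) × ℝ) :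
    Function.Surjective (heisChart heisForm p u v) := by
  rintro ⟨z, t⟩
  obtain ⟨a, b, hab⟩ := exists_eq_smul_add_smul huv (z - p.1)
  refine ⟨((a, b), (t - p.2 - heisForm p.1 (z - p.1)) / heisForm u v), ?_⟩
  rw [heisChart, ← hab, smul_eq_mul, div_mul_cancel₀ _ huv, add_sub_cancel]
  ext1 <;> simp

theorem IsMetivier.exists_heisChart_eq [Nontrivial Z] (hQ : IsMetivier Q) (p q : Z × T) :
    ∃ u v x, heisChart Q p u v x = q := by
  rcases eq_or_ne p.1 q.1 with heq | hne
  · obtain ⟨u, hu⟩ := exists_ne (0 : Z)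
    obtain ⟨v, hv⟩ := hQ.surjective u hu (q.2 - p.2)
    exact ⟨u, v, ((0, 0), 1), by ext <;> simp [heisChart, hv, heq]⟩
  · obtain ⟨v, hv⟩ := hQ.surjective (q.1 - p.1) (sub_ne_zero.2 hne.symm)
      (q.2 - p.2 - Q p.1 (q.1 - p.1))
    refine ⟨q.1 - p.1, v, ((1, 0), 1), ?_⟩
    ext <;> simp only [heisChart, one_smul, zero_smul, add_zero, hv] <;> abel

theorem HorizontallyConvex.preimage_heisChart (hQ : IsMetivier Q) {C : Set (Z × T)}
    (hC : HorizontallyConvex Q C) (p : Z × T) (u v : Z) :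
    HorizontallyConvex heisForm (heisChart Q p u v ⁻¹' C) := by
  intro x w hx hxw s hs₀ hs₁
  rw [mem_preimage, hQ.heisChart_hmove] at hxw ⊢
  have h := hC _ _ hx hxw s hs₀ hs₁
  rwa [smul_add, smul_smul, smul_smul] at h

theorem PreciselyMonotone.preimage_heisChart (hQ : IsMetivier Q) {E : Set (Z × T)}
    (hE : PreciselyMonotone Q E) (p : Z × T) (u v : Z) :
    PreciselyMonotone heisForm (heisChart Q p u v ⁻¹' E) :=
  ⟨hE.1.preimage_heisChart hQ p u v, hE.2.preimage_heisChart hQ p u v⟩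

theorem IsHorizontallyFlat.preimage_heisChart (hQ : IsMetivier Q) {S : Set (Z × T)}
    (hS : IsHorizontallyFlat Q S) (p : Z × T) (u v : Z) :
    IsHorizontallyFlat heisForm (heisChart Q p u v ⁻¹' S) := by
  intro x w hx hxw r
  rw [mem_preimage, hQ.heisChart_hmove] at hxw ⊢
  have h := hS _ _ hx hxw r
  rwa [smul_add, smul_smul, smul_smul] at h

theorem IsHorizontallyFlat.lineMap_mem {S : Set (Z × T)} (hS : IsHorizontallyFlat Q S)
    {p q : Z × T} (hp : p ∈ S) (hq : q ∈ S) (hself : Q p.1 p.1 = 0)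
    (hpq : q.2 = p.2 + Q p.1 q.1) (r : ℝ) : AffineMap.lineMap p q r ∈ S := by
  have hend : hmove Q p (q.1 - p.1) = q := by
    ext <;> simp [hmove, hself, hpq]
  have hline : hmove Q p (r • (q.1 - p.1)) = AffineMap.lineMap p q r := by
    ext <;> simp [hmove, AffineMap.lineMap_apply, hself, hpq, add_comm]
  exact hline ▸ hS p _ hp (hend.symm ▸ hq) r

end HeisenbergChart

section HeisenbergFlat

variable {S : Set ((ℝ × ℝ) × ℝ)}

theorem IsHorizontallyFlat.line_through_mem (hS : IsHorizontallyFlat heisForm S)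
    {x y t x' y' t' : ℝ} (hp : ((x, y), t) ∈ S) (hq : ((x', y'), t') ∈ S)
    (hpq : t' = t + (x * y' - y * x')) (r : ℝ) :
    ((x + r * (x' - x), y + r * (y' - y)), t + r * (t' - t)) ∈ S := by
  have hline := hS.lineMap_mem hp hq (isMetivier_heisForm.apply_self _)
    (by rw [heisForm_apply, hpq]) r
  convert hline using 1
  simp [AffineMap.lineMap_apply, add_comm]

theorem IsHorizontallyFlat.ruledSurface_mem (hS : IsHorizontallyFlat heisForm S)
    (hleft : ∀ r, ((-1, r), -r) ∈ S) (hright : ∀ r, ((1, r), r) ∈ S) (s r : ℝ) :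
    ((s, s * r), r) ∈ S := by
  convert hS.line_through_mem (hleft (-r)) (hright r) (by ring) ((1 + s) / 2) using 3 <;> ring

/-- On the surface `y = xt` every point over `x = 2` is joined by a horizontal line to every point
over `x = 1/2`, because `2 * (1/2) = 1`. -/
theorem IsHorizontallyFlat.mem_of_ruledSurface (hS : IsHorizontallyFlat heisForm S)
    (hsurf : ∀ s r, ((s, s * r), r) ∈ S) {x : ℝ} (hx₂ : x ≠ 2) (hx₁ : 2 * x ≠ 1) (y t : ℝ) :
    ((x, y), t) ∈ S := by
  have h₂ : 2 - x ≠ 0 := sub_ne_zero.2 hx₂.symm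
  have h₁ : 2 * x - 1 ≠ 0 := sub_ne_zero.2 hx₁
  convert hS.line_through_mem (hsurf 2 ((2 * y - t) / (2 * x - 1)))
    (hsurf (1 / 2) ((2 * t - y) / (2 - x))) (by ring) ((4 - 2 * x) / 3) using 3 <;>
  · field_simp
    ring

theorem IsHorizontallyFlat.eq_univ_of_ruledSurface (hS : IsHorizontallyFlat heisForm S)
    (hsurf : ∀ s r, ((s, s * r), r) ∈ S) : S = univ := by
  refine eq_univ_of_forall fun ⟨⟨x, y⟩, t⟩ => ?_
  by_cases hx : x ≠ 2 ∧ 2 * x ≠ 1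
  · exact hS.mem_of_ruledSurface hsurf hx.1 hx.2 y t
  have hoff : x - 1 ≠ 2 ∧ 2 * (x - 1) ≠ 1 ∧ x + 1 ≠ 2 ∧ 2 * (x + 1) ≠ 1 := by
    refine ⟨?_, ?_, ?_, ?_⟩ <;> intro h <;> exact hx ⟨by intro; linarith, by intro; linarith⟩
  have hbefore := hS.mem_of_ruledSurface hsurf hoff.1 hoff.2.1 y (t + y)
  have hafter := hS.mem_of_ruledSurface hsurf hoff.2.2.1 hoff.2.2.2 y (t - y)
  convert hS.line_through_mem hbefore hafter (by ring) (1 / 2) using 3 <;> ring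

theorem IsHorizontallyFlat.eq_univ_of_parallel (hS : IsHorizontallyFlat heisForm S)
    {p : (ℝ × ℝ) × ℝ} {u v : ℝ × ℝ} (huv : heisForm u v ≠ 0)
    (hp : ∀ r : ℝ, hmove heisForm p (r • v) ∈ S)
    (hpu : ∀ r : ℝ, hmove heisForm (hmove heisForm p u) (r • v) ∈ S) : S = univ := by
  let chart := heisChart heisForm (hmove heisForm p ((1 / 2 : ℝ) • u)) ((1 / 2 : ℝ) • u) v
  have hline (s r : ℝ) : chart ((s, r), s * r) =
      hmove heisForm (hmove heisForm p (((1 + s) / 2) • u)) (r • v) :=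
    isMetivier_heisForm.heisChart_parallel p u v s r
  have hleft (r : ℝ) : ((-1, r), -r) ∈ chart ⁻¹' S := by
    have h := hline (-1) r
    rw [add_neg_cancel, zero_div, zero_smul, hmove_zero, neg_one_mul] at h
    exact mem_preimage.2 (h ▸ hp r)
  have hright (r : ℝ) : ((1, r), r) ∈ chart ⁻¹' S := by
    have h := hline 1 r
    rw [one_add_one_eq_two, div_self two_ne_zero, one_smul, one_mul] at h
    exact mem_preimage.2 (h ▸ hpu r)
  have hflat : IsHorizontallyFlat heisForm (chart ⁻¹' S) :=
    hS.preimage_heisChart isMetivier_heisForm _ _ _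
  have huniv := hflat.eq_univ_of_ruledSurface (hflat.ruledSurface_mem hleft hright)
  have hsurj : Function.Surjective chart := heisChart_surjective (by simpa using huv) _
  rwa [preimage_eq_univ_iff, hsurj.range_eq, univ_subset_iff] at huniv

end HeisenbergFlat

section HeisenbergMonotone

variable {S E : Set ((ℝ × ℝ) × ℝ)}

theorem IsHorizontallyFlat.eq_univ_of_axes (hS : IsHorizontallyFlat heisForm S)
    (hfst : ∀ r, ((r, 0), 0) ∈ S) (hsnd : ∀ r, ((0, r), 0) ∈ S) {x y t : ℝ} (hy : y ≠ 0)
    (ht : t ≠ 0) (hmem : ((x, y), t) ∈ S) : S = univ := by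
  have hlink := hS.line_through_mem (hfst (t / y)) hmem (by field_simp; ring)
  rcases eq_or_ne x (t / y) with rfl | hx
  · refine hS.eq_univ_of_parallel (p := 0) (u := (t / y, 0)) (v := (0, 1))
      (by simp [hy, ht]) (fun r => ?_) (fun r => ?_)
    · convert hsnd r using 1
      simp [hmove]
    · convert hlink (r / y) using 1
      simp only [hmove, Prod.fst_zero, zero_add, Prod.snd_zero, map_zero, zero_apply, add_zero,
        Prod.smul_mk, smul_eq_mul, mul_zero, mul_one, Prod.mk_add_mk, heisForm_apply, sub_zero,
        sub_self, div_mul_cancel₀ r hy, Prod.mk.injEq, true_and]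
      field_simp
  · have hx' : t - x * y ≠ 0 := fun h => hx (by rw [eq_div_iff hy]; linarith)
    obtain ⟨b, hb, hbdef⟩ : ∃ b ≠ 0, b * (t - x * y) = 2 * t * y :=
      ⟨_, div_ne_zero (mul_ne_zero (mul_ne_zero two_ne_zero ht) hy) hx', div_mul_cancel₀ _ hx'⟩
    -- The horizontal line from the point to the first axis passes over `x = -(t / y)`, and there it
    -- meets a horizontal line which is parallel to the first axis and crosses the second.
    have hrefl : ((-(t / y), b), b * (t / y)) ∈ S := by
      convert hlink (b / y) using 3 <;>
      · field_simp
        linarith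
    have hcross := hS.line_through_mem hrefl (hsnd b) (by ring)
    refine hS.eq_univ_of_parallel (p := 0) (u := (0, b)) (v := (1, 0))
      (by simp [hb]) (fun r => ?_) (fun r => ?_)
    · convert hfst r using 1
      simp [hmove]
    · convert hcross (1 + r / (t / y)) using 1
      simp only [hmove, Prod.fst_zero, zero_add, Prod.snd_zero, map_zero, zero_apply, add_zero,
        Prod.smul_mk, smul_eq_mul, mul_one, mul_zero, Prod.mk_add_mk, heisForm_apply, zero_sub,
        sub_neg_eq_add, sub_self, mul_neg, Prod.mk.injEq, and_true]
      field_simp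
      exact ⟨by ring, by ring⟩

theorem IsHorizontallyFlat.eq_univ_of_cross (hS : IsHorizontallyFlat heisForm S)
    {p : (ℝ × ℝ) × ℝ} {u v : ℝ × ℝ} (huv : heisForm u v ≠ 0)
    (hu : ∀ r : ℝ, hmove heisForm p (r • u) ∈ S) (hv : ∀ r : ℝ, hmove heisForm p (r • v) ∈ S)
    {x y t : ℝ} (hy : y ≠ 0) (ht : t ≠ 0) (hmem : heisChart heisForm p u v ((x, y), t) ∈ S) :
    S = univ := by
  have hflat := hS.preimage_heisChart isMetivier_heisForm p u v
  have haxis (w : ℝ × ℝ) :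
      heisChart heisForm p u v (w, 0) = hmove heisForm p (w.1 • u + w.2 • v) := by
    simp [heisChart, hmove]
  have huniv := hflat.eq_univ_of_axes (fun r => by simpa [haxis] using hu r)
    (fun r => by simpa [haxis] using hv r) hy ht hmem
  rwa [preimage_eq_univ_iff, (heisChart_surjective huv p).range_eq, univ_subset_iff] at huniv

theorem IsHorizontallyFlat.subset_horizontalPlane (hS : IsHorizontallyFlat heisForm S)
    (hdir : ∀ q ∈ S, ∃ w ≠ 0, hmove heisForm q w ∈ S) (hne : S ≠ univ)
    {p : (ℝ × ℝ) × ℝ} {u v : ℝ × ℝ} (huv : heisForm u v ≠ 0)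
    (hu : ∀ r : ℝ, hmove heisForm p (r • u) ∈ S) (hv : ∀ r : ℝ, hmove heisForm p (r • v) ∈ S)
    {q : (ℝ × ℝ) × ℝ} (hq : q ∈ S) : q.2 - heisForm p.1 q.1 = p.2 := by
  have hvu : heisForm v u ≠ 0 := by
    rw [isMetivier_heisForm.skew]
    exact neg_ne_zero.2 huv
  have hcoord : ∀ {x y t : ℝ}, heisChart heisForm p u v ((x, y), t) ∈ S → t ≠ 0 →
      x = 0 ∧ y = 0 := by
    intro x y t hmem ht
    by_contra! hxy
    by_cases hx : x = 0
    · exact hne (hS.eq_univ_of_cross huv hu hv (hxy hx) ht hmem)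
    · exact hne (hS.eq_univ_of_cross hvu hv hu hx (neg_ne_zero.2 ht)
        ((isMetivier_heisForm.heisChart_swap p u v x y t).symm ▸ hmem))
  obtain ⟨⟨⟨x, y⟩, t⟩, rfl⟩ := heisChart_surjective huv p q
  have ht : t = 0 := by
    by_contra ht
    obtain ⟨w, hw, hqw⟩ := hdir _ hq
    obtain ⟨rfl, rfl⟩ := hcoord hq ht
    obtain ⟨a, b, rfl⟩ := exists_eq_smul_add_smul huv w
    have hmove_mem : heisChart heisForm p u v ((a, b), t) ∈ S := by
      have h := isMetivier_heisForm.heisChart_hmove p u v ((0, 0), t) (a, b)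
      rw [← h] at hqw
      simpa [hmove] using hqw
    obtain ⟨rfl, rfl⟩ := hcoord hmove_mem ht
    simp at hw
  have hself := isMetivier_heisForm.apply_self p.1
  simp only [heisChart, ht, map_add, hself, zero_smul, add_zero, zero_add, add_sub_cancel_right]

theorem PreciselyMonotone.convex_interior_of_line (hE : PreciselyMonotone heisForm E)
    {p : (ℝ × ℝ) × ℝ} (hp : p ∈ frontier E) {u : ℝ × ℝ} (hu : u ≠ 0)
    (hvert : ∀ q ∈ frontier E, heisForm u q.1 = heisForm u p.1) : Convex ℝ (interior E) := by
  obtain ⟨v, hv⟩ := isMetivier_heisForm.surjective u hu 1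
  refine hE.convex_interior_of_frontier_subset isMetivier_heisForm (u := v)
    (f := (heisForm u).comp (ContinuousLinearMap.fst ℝ (ℝ × ℝ) ℝ)) hvert hp ?_
  change heisForm u (p.1 + v) ≠ heisForm u p.1
  rw [map_add, hv]
  exact (lt_add_one _).ne'

theorem PreciselyMonotone.convex_interior_of_cross (hE : PreciselyMonotone heisForm E)
    {p : (ℝ × ℝ) × ℝ} {u v : ℝ × ℝ} (hp : p ∈ frontier E) (hu : hmove heisForm p u ∈ frontier E)
    (hv : hmove heisForm p v ∈ frontier E) (huv : heisForm u v ≠ 0) :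
    Convex ℝ (interior E) := by
  have hflat := hE.isHorizontallyFlat_frontier isMetivier_heisForm
  rcases eq_or_ne (frontier E) univ with huniv | hne
  · have hempty : interior E = ∅ :=
      disjoint_univ.1 (huniv ▸ disjoint_interior_frontier)
    exact hempty ▸ convex_empty
  have hdir : ∀ q ∈ frontier E, ∃ w ≠ 0, hmove heisForm q w ∈ frontier E := fun q hq =>
    hE.exists_hmove_mem_frontier isMetivier_heisForm (by norm_num) hq
  have hplane : ∀ q ∈ frontier E, q.2 - heisForm p.1 q.1 = p.2 := fun q =>
    hflat.subset_horizontalPlane hdir hne huv (hflat p u hp hu) (hflat p v hp hv)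
  refine hE.convex_interior_of_frontier_subset isMetivier_heisForm (u := v)
    (f := ContinuousLinearMap.snd ℝ (ℝ × ℝ) ℝ -
      (heisForm p.1).comp (ContinuousLinearMap.fst ℝ (ℝ × ℝ) ℝ)) hplane hu ?_
  have htransverse : (hmove heisForm (hmove heisForm p u) v).2 -
      heisForm p.1 (hmove heisForm (hmove heisForm p u) v).1 = p.2 + heisForm u v := by
    simp only [hmove, map_add, add_apply, isMetivier_heisForm.apply_self]
    ring
  exact fun h => huv (by linarith [htransverse.symm.trans h])

theorem PreciselyMonotone.convex_interior_heisForm (hE : PreciselyMonotone heisForm E) :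
    Convex ℝ (interior E) := by
  rcases (frontier E).eq_empty_or_nonempty with hempty | ⟨p, hp⟩
  · rcases frontier_eq_empty_iff.1 hempty with rfl | rfl
    · simpa using convex_empty
    · simpa using convex_univ
  obtain ⟨u, hu, hpu⟩ := hE.exists_hmove_mem_frontier isMetivier_heisForm (by norm_num) hp
  by_cases hvert : ∀ q ∈ frontier E, heisForm u q.1 = heisForm u p.1
  · exact hE.convex_interior_of_line hp hu hvert
  push Not at hvert
  obtain ⟨q, hq, hqp⟩ := hvert
  have hflat := hE.isHorizontallyFlat_frontier isMetivier_heisForm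
  have huu := isMetivier_heisForm.apply_self u
  obtain ⟨r, hr⟩ : ∃ r, r * (heisForm u q.1 - heisForm u p.1) = q.2 - p.2 - heisForm p.1 q.1 :=
    ⟨_, div_mul_cancel₀ _ (sub_ne_zero.2 hqp)⟩
  let p' := hmove heisForm p (r • u)
  have hp'q : hmove heisForm p' (q.1 - p'.1) = q := by
    have hlink : p'.2 + heisForm p'.1 (q.1 - p'.1) = q.2 := by
      simp only [p', hmove, map_sub, map_add, map_smul, add_apply, smul_apply, smul_eq_mul, huu,
        isMetivier_heisForm.apply_self p.1]
      linarith
    exact Prod.ext (add_sub_cancel _ _) hlink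
  refine hE.convex_interior_of_cross (p := p') (u := u) (v := q.1 - p'.1) (hflat p u hp hpu r)
    ?_ (hp'q.symm ▸ hq) ?_
  · have h := hmove_smul_hmove_smul huu p r 1
    rw [one_smul] at h
    exact h.symm ▸ hflat p u hp hpu _
  · have : heisForm u (q.1 - p'.1) = heisForm u q.1 - heisForm u p.1 := by
      simp only [p', hmove, map_sub, map_add, map_smul, huu, smul_zero, add_zero]
    rw [this]
    exact sub_ne_zero.2 hqp

end HeisenbergMonotone

section Separation

open scoped Pointwise in
theorem convex_interior_of_segment_subset {V : Type*} [AddCommGroup V] [Module ℝ V]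
    [TopologicalSpace V] [IsTopologicalAddGroup V] [ContinuousConstSMul ℝ V] {E : Set V}
    (hE : ∀ x ∈ interior E, ∀ y ∈ interior E, segment ℝ x y ⊆ E) : Convex ℝ (interior E) := by
  refine convex_iff_pointwise_add_subset.2 fun a b ha hb hab => interior_maximal ?_ ?_
  · rintro _ ⟨_, ⟨x, hx, rfl⟩, _, ⟨y, hy, rfl⟩, rfl⟩
    exact hE x hx y hy ⟨a, b, ha, hb, hab, rfl⟩
  · rcases eq_or_ne a 0 with rfl | ha₀
    · rw [zero_add] at hab
      exact (isOpen_interior.smul₀ (hab ▸ one_ne_zero)).add_left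
    · exact (isOpen_interior.smul₀ ha₀).add_right

theorem subset_interior_of_disjoint_interior_compl {V : Type*} [AddCommGroup V] [Module ℝ V]
    [TopologicalSpace V] [IsTopologicalAddGroup V] [ContinuousSMul ℝ V] {E U : Set V}
    (hconv : Convex ℝ (interior E)) (hne : (interior E).Nonempty)
    (hthin : interior (frontier E) = ∅) (hU : IsOpen U) (hUE : Disjoint U (interior Eᶜ)) :
    U ⊆ interior E := by
  have hdense : U ⊆ closure (interior E) := by
    refine ((interior_eq_empty_iff_dense_compl.1 hthin).open_subset_closure_inter hU).trans
      (closure_mono ?_)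
    rw [compl_frontier_eq_union_interior]
    rintro x ⟨hxU, hx | hx⟩
    · exact hx
    · exact (disjoint_left.1 hUE hxU hx).elim
  have hregular := hconv.interior_closure_eq_interior_of_nonempty_interior
    (by rwa [interior_interior])
  rw [interior_interior] at hregular
  exact hregular ▸ interior_maximal hdense hU

variable {Z T : Type*} [NormedAddCommGroup Z] [NormedSpace ℝ Z] [Nontrivial Z]
  [NormedAddCommGroup T] [NormedSpace ℝ T] {Q : Z →L[ℝ] Z →L[ℝ] T} {E : Set (Z × T)}

theorem PreciselyMonotone.segment_subset_of_mem_interior (hE : PreciselyMonotone Q E)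
    (hQ : IsMetivier Q) {p q : Z × T} (hp : p ∈ interior E) (hq : q ∈ interior E) :
    segment ℝ p q ⊆ E := by
  obtain ⟨u, v, x, rfl⟩ := hQ.exists_heisChart_eq p q
  have hconv := (hE.preimage_heisChart hQ p u v).convex_interior_heisForm
  have hint : heisChart Q p u v ⁻¹' interior E ⊆ interior (heisChart Q p u v ⁻¹' E) :=
    preimage_interior_subset_interior_preimage (continuous_heisChart p u v)
  rintro _ ⟨a, b, ha, hb, hab, rfl⟩
  have hmem := interior_subset
    (hconv (hint (by rwa [mem_preimage, heisChart_zero])) (hint hq) ha hb hab)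
  rwa [mem_preimage, heisChart_convexCombination p u v 0 x hab, heisChart_zero] at hmem

theorem PreciselyMonotone.convex_interior (hE : PreciselyMonotone Q E) (hQ : IsMetivier Q) :
    Convex ℝ (interior E) :=
  convex_interior_of_segment_subset fun _ hp _ hq =>
    hE.segment_subset_of_mem_interior hQ hp hq

theorem IsMetivier.eq_univ_of_hmove_mem (hQ : IsMetivier Q) {U : Set (Z × T)}
    (hU : U.Nonempty) (hmove_mem : ∀ p ∈ U, ∀ u, hmove Q p u ∈ U) : U = univ := by
  have hreach : ∀ p ∈ U, ∀ q : Z × T, p.1 ≠ q.1 → q ∈ U := by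
    intro p hp q hpq
    obtain ⟨x, hx⟩ := hQ.surjective (q.1 - p.1) (sub_ne_zero.2 hpq.symm)
      (p.2 + Q p.1 (q.1 - p.1) - q.2)
    have hq : hmove Q (hmove Q p x) (q.1 - p.1 - x) = q := by
      rw [hmove_hmove_sub (hQ.apply_self x), hQ.skew x, hx]
      ext1
      · simp
      · simp only
        abel
    exact hq ▸ hmove_mem _ (hmove_mem p hp x) _
  obtain ⟨p, hp⟩ := hU
  obtain ⟨e, he⟩ := exists_ne (0 : Z)
  refine eq_univ_of_forall fun q => ?_
  by_cases hpq : p.1 = q.1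
  · exact hreach (hmove Q p e) (hmove_mem p hp e) q (by simpa [hmove, hpq] using he)
  · exact hreach p hp q hpq

theorem IsHorizontallyFlat.interior_eq_empty {S : Set (Z × T)} (hS : IsHorizontallyFlat Q S)
    (hQ : IsMetivier Q) (hne : S ≠ univ) : interior S = ∅ := by
  by_contra! hint
  exact hne (interior_eq_univ.1 (hQ.eq_univ_of_hmove_mem hint fun _ hp u =>
    hS.hmove_mem_interior hp (hQ.apply_self u)))

variable [CompleteSpace Z] [CompleteSpace T]

theorem PreciselyMonotone.interior_nonempty (hE : PreciselyMonotone Q E) (hQ : IsMetivier Q)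
    (hne : (frontier E).Nonempty) (huniv : frontier E ≠ univ) : (interior E).Nonempty := by
  by_contra! hempty
  refine huniv (hQ.eq_univ_of_hmove_mem hne fun p hp u => ?_)
  by_contra hpu
  rw [← mem_compl_iff, compl_frontier_eq_union_interior, hempty, empty_union] at hpu
  have hback := hE.2.hmove_neg_mem_interior_compl hQ (frontier_compl E ▸ hp).2 hpu
  rw [compl_compl, hempty] at hback
  exact hback

end Separation

section Main

variable {Z T : Type*} [NormedAddCommGroup Z] [NormedSpace ℝ Z] [CompleteSpace Z] [Nontrivial Z]
  [NormedAddCommGroup T] [NormedSpace ℝ T] [CompleteSpace T] {Q : Z →L[ℝ] Z →L[ℝ] T}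
  {E : Set (Z × T)}

theorem PreciselyMonotone.subset_interior_of_disjoint (hE : PreciselyMonotone Q E)
    (hQ : IsMetivier Q) (hne : (frontier E).Nonempty) (hbd : frontier E ≠ univ)
    {U : Set (Z × T)} (hU : IsOpen U) (hUE : Disjoint U (interior Eᶜ)) : U ⊆ interior E :=
  subset_interior_of_disjoint_interior_compl (hE.convex_interior hQ)
    (hE.interior_nonempty hQ hne hbd)
    ((hE.isHorizontallyFlat_frontier hQ).interior_eq_empty hQ hbd) hU hUE

theorem PreciselyMonotone.exists_halfSpace (hE : PreciselyMonotone Q E) (hQ : IsMetivier Q)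
    (hne : (frontier E).Nonempty) (hbd : frontier E ≠ univ) :
    ∃ f : Z × T →L[ℝ] ℝ, f ≠ 0 ∧ ∃ c, {x | c < f x} ⊆ E ∧ E ⊆ closure {x | c < f x} := by
  have hne' : (frontier Eᶜ).Nonempty := by rwa [frontier_compl]
  have hbd' : frontier Eᶜ ≠ univ := by rwa [frontier_compl]
  obtain ⟨f, c, hout, hin⟩ := geometric_hahn_banach_open_open
    (hE.compl.convex_interior hQ) isOpen_interior (hE.convex_interior hQ) isOpen_interior
    (disjoint_compl_left.mono interior_subset interior_subset)
  have hf : f ≠ 0 := by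
    rintro rfl
    obtain ⟨a, ha⟩ := hE.interior_nonempty hQ hne hbd
    obtain ⟨b, hb⟩ := hE.compl.interior_nonempty hQ hne' hbd'
    exact lt_asymm (hin a ha) (hout b hb)
  have hgt : {x | c < f x} ⊆ interior E :=
    hE.subset_interior_of_disjoint hQ hne hbd (isOpen_lt continuous_const f.continuous)
      (disjoint_left.2 fun x hx hxE => lt_asymm hx (hout x hxE))
  have hlt : {x | f x < c} ⊆ interior Eᶜ := by
    refine hE.compl.subset_interior_of_disjoint hQ hne' hbd'
      (isOpen_lt f.continuous continuous_const) (disjoint_left.2 fun x hx hxE => ?_)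
    rw [compl_compl] at hxE
    exact lt_asymm hx (hin x hxE)
  refine ⟨f, hf, c, hgt.trans interior_subset, fun x hx => ?_⟩
  change x ∈ closure (f ⁻¹' Ioi c)
  rw [← (f.isOpenMap_of_ne_zero hf).preimage_closure_eq_closure_preimage f.continuous,
    closure_Ioi]
  by_contra hxc
  exact interior_subset (hlt (show f x < c from not_le.1 hxc)) hx

end Main

theorem exists_inner_add_inner_eq {V W : Type*} [NormedAddCommGroup V] [InnerProductSpace ℝ V]
    [CompleteSpace V] [NormedAddCommGroup W] [InnerProductSpace ℝ W] [CompleteSpace W]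
    (f : V × W →L[ℝ] ℝ) :
    ∃ ν : V × W, ∀ x : V × W, f x = inner ℝ x.1 ν.1 + inner ℝ x.2 ν.2 := by
  refine ⟨((InnerProductSpace.toDual ℝ V).symm (f.comp (.inl ℝ V W)),
    (InnerProductSpace.toDual ℝ W).symm (f.comp (.inr ℝ V W))), fun x => ?_⟩
  rw [real_inner_comm, real_inner_comm _ x.2, InnerProductSpace.toDual_symm_apply,
    InnerProductSpace.toDual_symm_apply]
  simp [← map_add]

theorem horizontallyConvex_of_hConvex {m l : ℕ} {Q : ZS m →ₗ[ℝ] ZS m →ₗ[ℝ] TS l}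
    {C : Set (ZS m × TS l)} (hC : HConvex Q C) :
    HorizontallyConvex Q.toContinuousBilinearMap C := by
  have hmove_eq : ∀ p u, hmove Q.toContinuousBilinearMap p u = gmul Q p (u, 0) := fun p u => by
    simp [hmove, gmul]
  intro p u hp hpu s hs₀ hs₁
  rw [hmove_eq] at hpu ⊢
  exact hC p u hp hpu s hs₀ hs₁

end StepTwo

theorem monotone_metivier_halfspace_general {Z T : Type*} [NormedAddCommGroup Z]
    [NormedSpace ℝ Z] [CompleteSpace Z] [Nontrivial Z] [NormedAddCommGroup T] [NormedSpace ℝ T]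
    [CompleteSpace T] {Q : Z →L[ℝ] Z →L[ℝ] T} (hQ : StepTwo.IsMetivier Q)
    {E : Set (Z × T)} (hE : StepTwo.PreciselyMonotone Q E) (hbd : frontier E ≠ Set.univ) :
    E = ∅ ∨ E = Set.univ ∨ ∃ f : Z × T →L[ℝ] ℝ, f ≠ 0 ∧ ∃ c,
      {x | c < f x} ⊆ E ∧ E ⊆ closure {x | c < f x} := by
  rw [← or_assoc, ← frontier_eq_empty_iff, or_iff_not_imp_left]
  exact fun hne => hE.exists_halfSpace hQ (Set.nonempty_iff_ne_empty.2 hne) hbd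

/-- **Monotone sets in Métivier groups:** if `E` is precisely monotone and
`∂E ≠ G`, then `E` is trivial or lies between an open half-space and its closure. -/
theorem monotone_metivier_halfspace
    (m l : ℕ) (hm : 0 < m) (hl : 0 < l)
    (Q : ZS m →ₗ[ℝ] ZS m →ₗ[ℝ] TS l)
    (hskew : ∀ z ζ : ZS m, Q z ζ = - Q ζ z)
    (hMet : ∀ z : ZS m, z ≠ 0 → Function.Surjective fun ζ => Q z ζ)
    (E : Set (ZS m × TS l)) (hE : HConvex Q E ∧ HConvex Q Eᶜ)
    (hbd : frontier E ≠ Set.univ) :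
    E = ∅ ∨ E = Set.univ ∨
    ∃ ν : ZS m × TS l, ν ≠ 0 ∧ ∃ c : ℝ,
      {x : ZS m × TS l | c < (inner ℝ x.1 ν.1 : ℝ) + (inner ℝ x.2 ν.2 : ℝ)} ⊆ E ∧
      E ⊆ closure {x : ZS m × TS l | c < (inner ℝ x.1 ν.1 : ℝ) + (inner ℝ x.2 ν.2 : ℝ)} := by
  have : NeZero m := ⟨hm.ne'⟩
  have hQ : StepTwo.IsMetivier Q.toContinuousBilinearMap := ⟨hskew, hMet⟩
  refine (monotone_metivier_halfspace_general hQ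
    (hE.imp StepTwo.horizontallyConvex_of_hConvex StepTwo.horizontallyConvex_of_hConvex)
    hbd).imp_right (Or.imp_right ?_)
  rintro ⟨f, hf, c, hhalf⟩
  obtain ⟨ν, hν⟩ := StepTwo.exists_inner_add_inner_eq f
  refine ⟨ν, ?_, c, by simpa only [hν] using hhalf⟩
  rintro rfl
  exact hf (ContinuousLinearMap.ext fun x => by simp [hν x])
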